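/- For every p > 0 and with u_{ik} := (V*W)_{ik}, the largest eigenvalue λ_1(p) of Z_p := (A^{p/2} B^p A^{p/2})^{1/p} satisfies both λ_1(p) ≤ d^{2/p} · max{ a_i b_k : u_{ik} ≠ 0 } and λ_1(p) ≥ ( min{ |u_{ik}|^2 : u_{ik} ≠ 0 } / d )^{1/p} · max{ a_i b_k : u_{ik} ≠ 0 }. -/

import Mathlib

open Matrix Filter Topology Finset
open scoped ComplexOrder

/-- Functional-calculus power of a (Hermitian, in practice positive semidefinite)
matrix, with the convention `0 ^ r = 0` for `r > 0`. -/
noncomputable def psdPow {d : ℕ} (A : Matrix (Fin d) (Fin d) ℂ) (r : ℝ) :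
    Matrix (Fin d) (Fin d) ℂ :=
  if hA : A.IsHermitian then
    (hA.eigenvectorUnitary : Matrix (Fin d) (Fin d) ℂ) *
      Matrix.diagonal (fun i => ((hA.eigenvalues i ^ r : ℝ) : ℂ)) *
      star (hA.eigenvectorUnitary : Matrix (Fin d) (Fin d) ℂ)
  else 0

/-- The eigenvalues of a Hermitian matrix, sorted in decreasing order
(with multiplicities). -/
noncomputable def eigsDesc {d : ℕ} (A : Matrix (Fin d) (Fin d) ℂ) : Fin d → ℝ :=
  if hA : A.IsHermitian then
    fun i => hA.eigenvalues (Tuple.sort hA.eigenvalues i.rev)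
  else 0

/-- `Zmat A B p = (A^{p/2} B^p A^{p/2})^{1/p}`. -/
noncomputable def Zmat {d : ℕ} (A B : Matrix (Fin d) (Fin d) ℂ) (p : ℝ) :
    Matrix (Fin d) (Fin d) ℂ :=
  psdPow (psdPow A (p / 2) * psdPow B p * psdPow A (p / 2)) (1 / p)

/-!
The positive semidefinite matrix `M = A^{p/2} B^p A^{p/2}` has top eigenvalue `λ₁(p)^p`, and its
trace lies between its top eigenvalue and `d` times it. By cyclicity
`tr M = tr (A^p B^p) = ∑ (a_i b_k)^p |u_{ik}|²`. Since `∑ |u_{ik}|² = d`, this sum is at most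
`d · max (a_i b_k)^p`, and it is at least any one of its terms. Bounding by the total mass of `u`
rather than by the `d²` entries gives the constant `d^{1/p}` in place of `d^{2/p}`.
-/

section UnitaryDiagonalization

variable {n 𝕜 : Type*} [Fintype n] [DecidableEq n] [RCLike 𝕜]

lemma diagonal_comp_mul_of_diagonal_mul {Q : Matrix n n 𝕜} {x y : n → ℝ}
    (h : diagonal (fun i => (x i : 𝕜)) * Q = Q * diagonal (fun i => (y i : 𝕜))) (f : ℝ → ℝ) :
    diagonal (fun i => (f (x i) : 𝕜)) * Q = Q * diagonal (fun i => (f (y i) : 𝕜)) := by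
  ext i j
  have hij : (x i : 𝕜) * Q i j = Q i j * (y j : 𝕜) := by
    simpa only [diagonal_mul, mul_diagonal] using congr($h i j)
  rw [diagonal_mul, mul_diagonal]
  by_cases hQ : Q i j = 0
  · simp only [hQ, mul_zero, zero_mul]
  · have hxy : x i = y j := by
      rw [mul_comm] at hij
      exact RCLike.ofReal_injective (mul_left_cancel₀ hQ hij)
    rw [hxy, mul_comm]

lemma conj_diagonal_comp_eq_of_conj_diagonal_eq {U V : Matrix n n 𝕜}
    (hU : U ∈ unitaryGroup n 𝕜) (hV : V ∈ unitaryGroup n 𝕜) {x y : n → ℝ}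
    (h : U * diagonal (fun i => (x i : 𝕜)) * Uᴴ = V * diagonal (fun i => (y i : 𝕜)) * Vᴴ)
    (f : ℝ → ℝ) :
    U * diagonal (fun i => (f (x i) : 𝕜)) * Uᴴ = V * diagonal (fun i => (f (y i) : 𝕜)) * Vᴴ := by
  have hU' : Uᴴ * U = 1 := mem_unitaryGroup_iff'.mp hU
  have hV' : Vᴴ * V = 1 := mem_unitaryGroup_iff'.mp hV
  have intertwine : diagonal (fun i => (x i : 𝕜)) * (Uᴴ * V) =
      (Uᴴ * V) * diagonal (fun i => (y i : 𝕜)) := by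
    calc _ = Uᴴ * (U * diagonal (fun i => (x i : 𝕜)) * Uᴴ) * V := by
          simp only [← mul_assoc, hU', one_mul]
      _ = _ := by rw [h]; simp only [mul_assoc, hV', mul_one]
  calc U * diagonal (fun i => (f (x i) : 𝕜)) * Uᴴ
      = U * (diagonal (fun i => (f (x i) : 𝕜)) * (Uᴴ * V)) * Vᴴ := by
        simp only [mul_assoc, show V * Vᴴ = 1 from mem_unitaryGroup_iff.mp hV, mul_one]
    _ = V * diagonal (fun i => (f (y i) : 𝕜)) * Vᴴ := by
        rw [diagonal_comp_mul_of_diagonal_mul intertwine f]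
        simp only [← mul_assoc, show U * Uᴴ = 1 from mem_unitaryGroup_iff.mp hU, one_mul]

lemma isHermitian_conj_diagonal (U : Matrix n n 𝕜) (x : n → ℝ) :
    (U * diagonal (fun i => (x i : 𝕜)) * Uᴴ).IsHermitian :=
  isHermitian_mul_mul_conjTranspose _ <| isHermitian_diagonal_of_self_adjoint _ <|
    funext fun i => RCLike.conj_ofReal (x i)

lemma posSemidef_conj_diagonal (U : Matrix n n 𝕜) {x : n → ℝ} (hx : ∀ i, 0 ≤ x i) :
    (U * diagonal (fun i => (x i : 𝕜)) * Uᴴ).PosSemidef :=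
  (PosSemidef.diagonal fun i => RCLike.ofReal_nonneg.mpr (hx i)).mul_mul_conjTranspose_same U

theorem cfc_conj_diagonal {U : Matrix n n 𝕜} (hU : U ∈ unitaryGroup n 𝕜) (f : ℝ → ℝ)
    (x : n → ℝ) :
    cfc f (U * diagonal (fun i => (x i : 𝕜)) * Uᴴ) =
      U * diagonal (fun i => (f (x i) : 𝕜)) * Uᴴ := by
  have hX := isHermitian_conj_diagonal U x
  rw [hX.cfc_eq]
  exact conj_diagonal_comp_eq_of_conj_diagonal_eq hX.eigenvectorUnitary.2 hU
    hX.spectral_theorem.symm f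

lemma trace_conj_diagonal_mul_conj_diagonal {m : Type*} [Fintype m] [DecidableEq m]
    {l : Type*} [Fintype l] (V : Matrix l m 𝕜) (W : Matrix l n 𝕜) (x : m → ℝ) (y : n → ℝ) :
    trace ((V * diagonal (fun i => (x i : 𝕜)) * Vᴴ) * (W * diagonal (fun k => (y k : 𝕜)) * Wᴴ)) =
      ((∑ i, ∑ k, x i * y k * ‖(Vᴴ * W) i k‖ ^ 2 : ℝ) : 𝕜) := by
  have cyclic : trace ((V * diagonal (fun i => (x i : 𝕜)) * Vᴴ) *
      (W * diagonal (fun k => (y k : 𝕜)) * Wᴴ)) =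
      trace (diagonal (fun i => (x i : 𝕜)) * (Vᴴ * W) * diagonal (fun k => (y k : 𝕜)) *
        (Vᴴ * W)ᴴ) := by
    simp only [Matrix.mul_assoc, conjTranspose_mul, conjTranspose_conjTranspose]
    rw [trace_mul_comm]
    simp only [Matrix.mul_assoc]
  rw [cyclic, trace]
  push_cast
  refine Finset.sum_congr rfl fun i _ => ?_
  rw [diag_apply, mul_apply]
  refine Finset.sum_congr rfl fun k _ => ?_
  rw [mul_diagonal, diagonal_mul, conjTranspose_apply, ← RCLike.mul_conj, starRingEnd_apply]
  ring

lemma conjTranspose_mul_mem_unitaryGroup {V W : Matrix n n 𝕜} (hV : V ∈ unitaryGroup n 𝕜)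
    (hW : W ∈ unitaryGroup n 𝕜) : Vᴴ * W ∈ unitaryGroup n 𝕜 :=
  mul_mem (Unitary.star_mem hV) hW

lemma sum_sum_norm_sq_of_mem_unitaryGroup {U : Matrix n n 𝕜} (hU : U ∈ unitaryGroup n 𝕜) :
    ∑ i, ∑ j, ‖U i j‖ ^ 2 = Fintype.card n := by
  have hU' : U * Uᴴ = 1 := mem_unitaryGroup_iff.mp hU
  have h := trace_conj_diagonal_mul_conj_diagonal (1 : Matrix n n 𝕜) U (fun _ => 1) (fun _ => 1)
  simp only [RCLike.ofReal_one, diagonal_one, mul_one, conjTranspose_one, one_mul, hU',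
    trace_one] at h
  exact_mod_cast h.symm

lemma exists_ne_zero_of_mem_unitaryGroup [Nonempty n] {U : Matrix n n 𝕜}
    (hU : U ∈ unitaryGroup n 𝕜) : ∃ i k, U i k ≠ 0 := by
  by_contra! h
  have h0 : U = 0 := by ext i k; exact h i k
  simpa only [h0, zero_mul, zero_ne_one] using mem_unitaryGroup_iff.mp hU

lemma sum_sum_mul_norm_sq_le_of_mem_unitaryGroup {U : Matrix n n 𝕜} (hU : U ∈ unitaryGroup n 𝕜)
    {w : n → n → ℝ} {c : ℝ} (hw : ∀ i k, U i k ≠ 0 → w i k ≤ c) :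
    ∑ i, ∑ k, w i k * ‖U i k‖ ^ 2 ≤ Fintype.card n * c := by
  have hterm (i k) : w i k * ‖U i k‖ ^ 2 ≤ c * ‖U i k‖ ^ 2 := by
    rcases eq_or_ne (U i k) 0 with h0 | h0
    · rw [h0, norm_zero, zero_pow two_ne_zero, mul_zero, mul_zero]
    · exact mul_le_mul_of_nonneg_right (hw i k h0) (sq_nonneg _)
  calc ∑ i, ∑ k, w i k * ‖U i k‖ ^ 2 ≤ ∑ i, ∑ k, c * ‖U i k‖ ^ 2 :=
        Finset.sum_le_sum fun i _ => Finset.sum_le_sum fun k _ => hterm i k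
    _ = Fintype.card n * c := by
        simp only [← Finset.mul_sum]
        rw [sum_sum_norm_sq_of_mem_unitaryGroup hU, mul_comm]

end UnitaryDiagonalization

section TopEigenvalue

open scoped MatrixOrder

variable {n 𝕜 : Type*} [Fintype n] [DecidableEq n] [RCLike 𝕜]

lemma le_re_trace_of_mem_spectrum {M : Matrix n n 𝕜} (hM : M.PosSemidef) {t : ℝ}
    (ht : t ∈ spectrum ℝ M) : t ≤ RCLike.re M.trace := by
  obtain ⟨i, rfl⟩ := hM.1.spectrum_real_eq_range_eigenvalues ▸ ht
  rw [hM.1.trace_eq_sum_eigenvalues, ← RCLike.ofReal_sum, RCLike.ofReal_re]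
  exact Finset.single_le_sum (fun i _ => hM.eigenvalues_nonneg i) (Finset.mem_univ i)

lemma re_trace_le_card_mul_of_mem_upperBounds_spectrum {M : Matrix n n 𝕜} (hM : M.IsHermitian)
    {t : ℝ} (ht : t ∈ upperBounds (spectrum ℝ M)) : RCLike.re M.trace ≤ Fintype.card n * t := by
  rw [hM.trace_eq_sum_eigenvalues, ← RCLike.ofReal_sum, RCLike.ofReal_re, ← nsmul_eq_mul]
  exact Finset.sum_le_card_nsmul _ _ _ fun i _ => ht (hM.eigenvalues_mem_spectrum_real i)

variable {d : ℕ}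

lemma isGreatest_eigsDesc_zero (hd : 0 < d) {X : Matrix (Fin d) (Fin d) ℂ}
    (hX : X.IsHermitian) : IsGreatest (spectrum ℝ X) (eigsDesc X ⟨0, hd⟩) := by
  rw [hX.spectrum_real_eq_range_eigenvalues, eigsDesc, dif_pos hX]
  refine ⟨Set.mem_range_self _, Set.forall_mem_range.mpr fun i => ?_⟩
  have hle : (Tuple.sort hX.eigenvalues).symm i ≤ Fin.rev ⟨0, hd⟩ :=
    Fin.le_rev_iff.mpr (Nat.zero_le _)
  simpa only [Function.comp_apply, Equiv.apply_symm_apply] using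
    Tuple.monotone_sort hX.eigenvalues hle

lemma psdPow_eq_cfc {A : Matrix (Fin d) (Fin d) ℂ} (hA : A.IsHermitian) (r : ℝ) :
    psdPow A r = cfc (fun x : ℝ => x ^ r) A := by
  rw [psdPow, dif_pos hA, hA.cfc_eq]
  rfl

lemma psdPow_conj_diagonal {U : Matrix (Fin d) (Fin d) ℂ} (hU : U ∈ unitaryGroup (Fin d) ℂ)
    (x : Fin d → ℝ) (r : ℝ) :
    psdPow (U * diagonal (fun i => (x i : ℂ)) * Uᴴ) r =
      U * diagonal (fun i => ((x i ^ r : ℝ) : ℂ)) * Uᴴ :=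
  (psdPow_eq_cfc (isHermitian_conj_diagonal U x) r).trans (cfc_conj_diagonal hU (fun t => t ^ r) x)

lemma posSemidef_psdPow {A : Matrix (Fin d) (Fin d) ℂ} (hA : A.PosSemidef) (r : ℝ) :
    (psdPow A r).PosSemidef := by
  rw [psdPow_eq_cfc hA.1, ← Matrix.nonneg_iff_posSemidef]
  exact cfc_nonneg fun t ht => Real.rpow_nonneg (spectrum_nonneg_of_nonneg hA.nonneg ht) r

lemma psdPow_mul_psdPow {A : Matrix (Fin d) (Fin d) ℂ} (hA : A.PosSemidef) {r s : ℝ}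
    (hr : 0 ≤ r) (hs : 0 ≤ s) : psdPow A r * psdPow A s = psdPow A (r + s) := by
  simp only [psdPow_eq_cfc hA.1]
  have hc (f : ℝ → ℝ) : ContinuousOn f (spectrum ℝ A) := A.finite_real_spectrum.continuousOn f
  rw [← cfc_mul _ _ A (hc _) (hc _)]
  exact cfc_congr fun t ht =>
    (Real.rpow_add_of_nonneg (spectrum_nonneg_of_nonneg hA.nonneg ht) hr hs).symm

theorem eigsDesc_psdPow_zero (hd : 0 < d) {M : Matrix (Fin d) (Fin d) ℂ} (hM : M.PosSemidef)
    {r : ℝ} (hr : 0 ≤ r) : eigsDesc (psdPow M r) ⟨0, hd⟩ = eigsDesc M ⟨0, hd⟩ ^ r := by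
  refine (isGreatest_eigsDesc_zero hd (posSemidef_psdPow hM r).1).unique ?_
  rw [psdPow_eq_cfc hM.1, cfc_map_spectrum (fun x : ℝ => x ^ r) M hM.1.isSelfAdjoint
    (M.finite_real_spectrum.continuousOn _)]
  refine MonotoneOn.map_isGreatest (fun s hs t _ hst => ?_) (isGreatest_eigsDesc_zero hd hM.1)
  exact Real.rpow_le_rpow (spectrum_nonneg_of_nonneg hM.nonneg hs) hst hr

/-- The positive semidefinite matrix `A^{p/2} B^p A^{p/2}`, of which `Zmat A B p` is the
`1/p`-th power. -/
noncomputable def powSandwich (A B : Matrix (Fin d) (Fin d) ℂ) (p : ℝ) :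
    Matrix (Fin d) (Fin d) ℂ :=
  psdPow A (p / 2) * psdPow B p * psdPow A (p / 2)

lemma posSemidef_powSandwich {A B : Matrix (Fin d) (Fin d) ℂ} (hA : A.PosSemidef)
    (hB : B.PosSemidef) (p : ℝ) : (powSandwich A B p).PosSemidef := by
  have h := (posSemidef_psdPow hB p).mul_mul_conjTranspose_same (psdPow A (p / 2))
  rwa [(posSemidef_psdPow hA _).1.eq] at h

lemma trace_powSandwich {A : Matrix (Fin d) (Fin d) ℂ} (hA : A.PosSemidef)
    (B : Matrix (Fin d) (Fin d) ℂ) {p : ℝ} (hp : 0 ≤ p) :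
    (powSandwich A B p).trace = (psdPow A p * psdPow B p).trace := by
  rw [powSandwich, trace_mul_comm, ← mul_assoc,
    psdPow_mul_psdPow hA (by positivity) (by positivity), add_halves]

theorem eigsDesc_Zmat_zero (hd : 0 < d) {A B : Matrix (Fin d) (Fin d) ℂ} (hA : A.PosSemidef)
    (hB : B.PosSemidef) {p : ℝ} (hp : 0 ≤ p) :
    eigsDesc (Zmat A B p) ⟨0, hd⟩ = eigsDesc (powSandwich A B p) ⟨0, hd⟩ ^ (1 / p) :=
  eigsDesc_psdPow_zero hd (posSemidef_powSandwich hA hB p) (one_div_nonneg.mpr hp)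

theorem eigsDesc_Zmat_zero_le_trace_rpow (hd : 0 < d) {A B : Matrix (Fin d) (Fin d) ℂ}
    (hA : A.PosSemidef) (hB : B.PosSemidef) {p : ℝ} (hp : 0 ≤ p) :
    eigsDesc (Zmat A B p) ⟨0, hd⟩ ≤ RCLike.re (psdPow A p * psdPow B p).trace ^ (1 / p) := by
  have hM := posSemidef_powSandwich hA hB p
  have htop := (isGreatest_eigsDesc_zero hd hM.1).1
  rw [eigsDesc_Zmat_zero hd hA hB hp, ← trace_powSandwich hA B hp]
  exact Real.rpow_le_rpow (spectrum_nonneg_of_nonneg hM.nonneg htop)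
    (le_re_trace_of_mem_spectrum hM htop) (one_div_nonneg.mpr hp)

theorem trace_div_rpow_le_eigsDesc_Zmat_zero (hd : 0 < d) {A B : Matrix (Fin d) (Fin d) ℂ}
    (hA : A.PosSemidef) (hB : B.PosSemidef) {p : ℝ} (hp : 0 ≤ p) :
    (RCLike.re (psdPow A p * psdPow B p).trace / d) ^ (1 / p) ≤
      eigsDesc (Zmat A B p) ⟨0, hd⟩ := by
  have hM := posSemidef_powSandwich hA hB p
  have htrace : RCLike.re (powSandwich A B p).trace ≤ d * eigsDesc (powSandwich A B p) ⟨0, hd⟩ := by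
    simpa only [Fintype.card_fin] using
      re_trace_le_card_mul_of_mem_upperBounds_spectrum hM.1 (isGreatest_eigsDesc_zero hd hM.1).2
  rw [eigsDesc_Zmat_zero hd hA hB hp, ← trace_powSandwich hA B hp]
  exact Real.rpow_le_rpow
    (div_nonneg (RCLike.nonneg_iff.mp hM.trace_nonneg).1 d.cast_nonneg)
    ((div_le_iff₀' (Nat.cast_pos.mpr hd)).mpr htrace) (one_div_nonneg.mpr hp)

end TopEigenvalue

section Diagonalized

variable {d : ℕ} {A B V W : Matrix (Fin d) (Fin d) ℂ} {a b : Fin d → ℝ} {p : ℝ}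

lemma re_trace_psdPow_mul_psdPow_conj_diagonal
    (hV : V ∈ unitaryGroup (Fin d) ℂ) (hW : W ∈ unitaryGroup (Fin d) ℂ)
    (ha : ∀ i, 0 ≤ a i) (hb : ∀ k, 0 ≤ b k)
    (hA : A = V * diagonal (fun i => (a i : ℂ)) * Vᴴ)
    (hB : B = W * diagonal (fun k => (b k : ℂ)) * Wᴴ) :
    RCLike.re (psdPow A p * psdPow B p).trace =
      ∑ i, ∑ k, (a i * b k) ^ p * ‖(Vᴴ * W) i k‖ ^ 2 := by
  have htrace := trace_conj_diagonal_mul_conj_diagonal V W (fun i => a i ^ p) (fun k => b k ^ p)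
  rw [hA, hB, psdPow_conj_diagonal hV, psdPow_conj_diagonal hW]
  simp only [Real.mul_rpow (ha _) (hb _)]
  exact (congrArg RCLike.re htrace).trans (RCLike.ofReal_re _)

theorem eigsDesc_Zmat_zero_le (hd : 0 < d)
    (hV : V ∈ unitaryGroup (Fin d) ℂ) (hW : W ∈ unitaryGroup (Fin d) ℂ)
    (ha : ∀ i, 0 ≤ a i) (hb : ∀ k, 0 ≤ b k)
    (hA : A = V * diagonal (fun i => (a i : ℂ)) * Vᴴ)
    (hB : B = W * diagonal (fun k => (b k : ℂ)) * Wᴴ) (hp : 0 < p) {m : ℝ} (hm : 0 ≤ m)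
    (hle : ∀ i k, (Vᴴ * W) i k ≠ 0 → a i * b k ≤ m) :
    eigsDesc (Zmat A B p) ⟨0, hd⟩ ≤ (d : ℝ) ^ (1 / p) * m := by
  have hab (i k) : 0 ≤ a i * b k := mul_nonneg (ha i) (hb k)
  have htrace : RCLike.re (psdPow A p * psdPow B p).trace ≤ d * m ^ p := by
    rw [re_trace_psdPow_mul_psdPow_conj_diagonal hV hW ha hb hA hB]
    simpa only [Fintype.card_fin] using sum_sum_mul_norm_sq_le_of_mem_unitaryGroup
      (conjTranspose_mul_mem_unitaryGroup hV hW) fun i k hu =>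
        Real.rpow_le_rpow (hab i k) (hle i k hu) hp.le
  have htrace_nonneg : 0 ≤ RCLike.re (psdPow A p * psdPow B p).trace := by
    rw [re_trace_psdPow_mul_psdPow_conj_diagonal hV hW ha hb hA hB]
    exact Finset.sum_nonneg fun i _ => Finset.sum_nonneg fun k _ =>
      mul_nonneg (Real.rpow_nonneg (hab i k) p) (sq_nonneg _)
  calc eigsDesc (Zmat A B p) ⟨0, hd⟩
      ≤ RCLike.re (psdPow A p * psdPow B p).trace ^ (1 / p) :=
        eigsDesc_Zmat_zero_le_trace_rpow hd (hA ▸ posSemidef_conj_diagonal V ha)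
          (hB ▸ posSemidef_conj_diagonal W hb) hp.le
    _ ≤ (d * m ^ p) ^ (1 / p) :=
        Real.rpow_le_rpow htrace_nonneg htrace (one_div_nonneg.mpr hp.le)
    _ = (d : ℝ) ^ (1 / p) * m := by
        rw [Real.mul_rpow d.cast_nonneg (Real.rpow_nonneg hm p), one_div,
          Real.rpow_rpow_inv hm hp.ne']

theorem le_eigsDesc_Zmat_zero (hd : 0 < d)
    (hV : V ∈ unitaryGroup (Fin d) ℂ) (hW : W ∈ unitaryGroup (Fin d) ℂ)
    (ha : ∀ i, 0 ≤ a i) (hb : ∀ k, 0 ≤ b k)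
    (hA : A = V * diagonal (fun i => (a i : ℂ)) * Vᴴ)
    (hB : B = W * diagonal (fun k => (b k : ℂ)) * Wᴴ) (hp : 0 < p) (i k : Fin d) :
    (‖(Vᴴ * W) i k‖ ^ 2 / d) ^ (1 / p) * (a i * b k) ≤ eigsDesc (Zmat A B p) ⟨0, hd⟩ := by
  have hab (i k) : 0 ≤ a i * b k := mul_nonneg (ha i) (hb k)
  have hterm (i k) : 0 ≤ (a i * b k) ^ p * ‖(Vᴴ * W) i k‖ ^ 2 :=
    mul_nonneg (Real.rpow_nonneg (hab i k) p) (sq_nonneg _)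
  have htrace : (a i * b k) ^ p * ‖(Vᴴ * W) i k‖ ^ 2 ≤
      RCLike.re (psdPow A p * psdPow B p).trace := by
    rw [re_trace_psdPow_mul_psdPow_conj_diagonal hV hW ha hb hA hB]
    exact (Finset.single_le_sum (fun k _ => hterm i k) (Finset.mem_univ k)).trans
      (Finset.single_le_sum (fun i _ => Finset.sum_nonneg fun k _ => hterm i k)
        (Finset.mem_univ i))
  calc (‖(Vᴴ * W) i k‖ ^ 2 / d) ^ (1 / p) * (a i * b k)
      = ((a i * b k) ^ p * ‖(Vᴴ * W) i k‖ ^ 2 / d) ^ (1 / p) := by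
        rw [mul_div_assoc, Real.mul_rpow (Real.rpow_nonneg (hab i k) p) (by positivity), one_div,
          Real.rpow_rpow_inv (hab i k) hp.ne', mul_comm]
    _ ≤ (RCLike.re (psdPow A p * psdPow B p).trace / d) ^ (1 / p) :=
        Real.rpow_le_rpow (div_nonneg (hterm i k) d.cast_nonneg)
          (div_le_div_of_nonneg_right htrace d.cast_nonneg) (one_div_nonneg.mpr hp.le)
    _ ≤ eigsDesc (Zmat A B p) ⟨0, hd⟩ :=
        trace_div_rpow_le_eigsDesc_Zmat_zero hd (hA ▸ posSemidef_conj_diagonal V ha)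
          (hB ▸ posSemidef_conj_diagonal W hb) hp.le

end Diagonalized

theorem anti_lie_trotter_top_eigenvalue_estimates_general
    {d : ℕ} (hd : 0 < d) (A B V W : Matrix (Fin d) (Fin d) ℂ) (a b : Fin d → ℝ)
    (hV : V ∈ Matrix.unitaryGroup (Fin d) ℂ)
    (hW : W ∈ Matrix.unitaryGroup (Fin d) ℂ)
    (ha0 : ∀ i, 0 ≤ a i) (hb0 : ∀ i, 0 ≤ b i)
    (hAd : A = V * Matrix.diagonal (fun i => (a i : ℂ)) * Vᴴ)
    (hBd : B = W * Matrix.diagonal (fun i => (b i : ℂ)) * Wᴴ)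
    (p : ℝ) (hp : 0 < p) :
    eigsDesc (Zmat A B p) ⟨0, hd⟩ ≤
      (d : ℝ) ^ (1 / p) *
        sSup {x : ℝ | ∃ i k : Fin d, (Vᴴ * W) i k ≠ 0 ∧ x = a i * b k} ∧
    (sInf {y : ℝ | ∃ i k : Fin d, (Vᴴ * W) i k ≠ 0 ∧ y = ‖(Vᴴ * W) i k‖ ^ 2} / d)
        ^ (1 / p) *
        sSup {x : ℝ | ∃ i k : Fin d, (Vᴴ * W) i k ≠ 0 ∧ x = a i * b k} ≤
      eigsDesc (Zmat A B p) ⟨0, hd⟩ := by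
  have : Nonempty (Fin d) := ⟨⟨0, hd⟩⟩
  set S := {x : ℝ | ∃ i k : Fin d, (Vᴴ * W) i k ≠ 0 ∧ x = a i * b k}
  have hS_finite : S.Finite := (Set.finite_range fun q : Fin d × Fin d => a q.1 * b q.2).subset
    fun x ⟨i, k, _, hx⟩ => ⟨(i, k), hx.symm⟩
  have hS_nonempty : S.Nonempty :=
    have ⟨i, k, hu⟩ := exists_ne_zero_of_mem_unitaryGroup (conjTranspose_mul_mem_unitaryGroup hV hW)
    ⟨_, i, k, hu, rfl⟩
  obtain ⟨i, k, hu, hmax⟩ := hS_nonempty.csSup_mem hS_finite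
  have hmax_nonneg : 0 ≤ sSup S := hmax ▸ mul_nonneg (ha0 i) (hb0 k)
  refine ⟨eigsDesc_Zmat_zero_le hd hV hW ha0 hb0 hAd hBd hp hmax_nonneg fun i k hu =>
    le_csSup hS_finite.bddAbove ⟨i, k, hu, rfl⟩, ?_⟩
  refine le_trans ?_ (hmax ▸ le_eigsDesc_Zmat_zero hd hV hW ha0 hb0 hAd hBd hp i k)
  gcongr
  · exact div_nonneg (Real.sInf_nonneg (by rintro _ ⟨i, k, -, rfl⟩; positivity)) d.cast_nonneg
  · exact csInf_le ⟨0, by rintro _ ⟨i, k, -, rfl⟩; positivity⟩ ⟨i, k, hu, rfl⟩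

/-- Two-sided estimate for the largest eigenvalue `λ_1(p)` of
`Z_p = (A^{p/2} B^p A^{p/2})^{1/p}`:
`λ_1(p) ≤ d^{2/p} · max{a_i b_k : u_{ik} ≠ 0}` and
`λ_1(p) ≥ (min{|u_{ik}|² : u_{ik} ≠ 0} / d)^{1/p} · max{a_i b_k : u_{ik} ≠ 0}`,
where `u = V*W`. -/
theorem anti_lie_trotter_top_eigenvalue_estimates
    {d : ℕ} (hd : 0 < d) (A B V W : Matrix (Fin d) (Fin d) ℂ) (a b : Fin d → ℝ)
    (hA : A.PosSemidef) (hB : B.PosSemidef)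
    (hV : V ∈ Matrix.unitaryGroup (Fin d) ℂ)
    (hW : W ∈ Matrix.unitaryGroup (Fin d) ℂ)
    (ha : Antitone a) (hb : Antitone b)
    (ha0 : ∀ i, 0 ≤ a i) (hb0 : ∀ i, 0 ≤ b i)
    (hAd : A = V * Matrix.diagonal (fun i => (a i : ℂ)) * Vᴴ)
    (hBd : B = W * Matrix.diagonal (fun i => (b i : ℂ)) * Wᴴ)
    (p : ℝ) (hp : 0 < p) :
    eigsDesc (Zmat A B p) ⟨0, hd⟩ ≤
      (d : ℝ) ^ (2 / p) *
        sSup {x : ℝ | ∃ i k : Fin d, (Vᴴ * W) i k ≠ 0 ∧ x = a i * b k} ∧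
    (sInf {y : ℝ | ∃ i k : Fin d, (Vᴴ * W) i k ≠ 0 ∧ y = ‖(Vᴴ * W) i k‖ ^ 2} / d)
        ^ (1 / p) *
        sSup {x : ℝ | ∃ i k : Fin d, (Vᴴ * W) i k ≠ 0 ∧ x = a i * b k} ≤
      eigsDesc (Zmat A B p) ⟨0, hd⟩ := by
  obtain ⟨hle, hge⟩ := anti_lie_trotter_top_eigenvalue_estimates_general hd A B V W a b hV hW
    ha0 hb0 hAd hBd p hp
  refine ⟨hle.trans ?_, hge⟩
  gcongr
  · exact Real.sSup_nonneg (by rintro _ ⟨i, k, -, rfl⟩; exact mul_nonneg (ha0 i) (hb0 k))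
  · exact Nat.one_le_cast.mpr hd
  · exact one_le_two
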